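/- arXiv:1605.07939 — 2 statements merged into one kernel-verified Lean document; each statement's English description precedes it below -/
import Mathlib

section
/- In a decomposable space 𝒳 of measurable ℝ^d-valued functions with respect to a σ-finite measure μ, if the infimum of ∫ h(x) dμ over x ∈ 𝒳 is finite for a normal integrand h, then inf_{x∈𝒳} ∫ h_t(x_t) dμ = ∫ inf_{x∈ℝ^d} h_t(x) dμ. -/
open MeasureTheory Set
open scoped ENNReal

/-- Positive part of an extended real, as an `ℝ≥0∞`. -/
noncomputable def epos (e : EReal) : ℝ≥0∞ := if e = ⊤ then ⊤ else ENNReal.ofReal e.toReal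

/-- The integral of an `EReal`-valued function, with the convention that it is `+∞`
unless the positive part is integrable. -/
noncomputable def eIntegral {α : Type*} [MeasurableSpace α] (μ : Measure α)
    (g : α → EReal) : EReal :=
  if (∫⁻ a, epos (g a) ∂μ) = ⊤ then ⊤
  else ((∫⁻ a, epos (g a) ∂μ : ℝ≥0∞) : EReal) - ((∫⁻ a, epos (-(g a)) ∂μ : ℝ≥0∞) : EReal)

/-- A set of measurable functions is decomposable if it is stable under replacing a
function by a bounded measurable one on a measurable set of finite measure. -/
def Decomposable {α : Type*} [MeasurableSpace α] (μ : Measure α) {d : ℕ}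
    (𝒳 : Set (α → Fin d → ℝ)) : Prop :=
  ∀ x ∈ 𝒳, ∀ x' : α → Fin d → ℝ, Measurable x' → (∃ C : ℝ, ∀ a, ‖x' a‖ ≤ C) →
    ∀ A : Set α, MeasurableSet A → μ A < ⊤ →
      (fun a => A.indicator x' a + Aᶜ.indicator x a) ∈ 𝒳

theorem epos_mono : Monotone epos := by
  intro a b hab
  induction a <;> induction b <;> simp_all [epos, ENNReal.ofReal_le_ofReal]

theorem eIntegral_mono_ae {α : Type*} [MeasurableSpace α] {μ : Measure α} {f g : α → EReal}
    (hfg : f ≤ᵐ[μ] g) : eIntegral μ f ≤ eIntegral μ g := by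
  have hpos : ∫⁻ a, epos (f a) ∂μ ≤ ∫⁻ a, epos (g a) ∂μ :=
    lintegral_mono_ae (hfg.mono fun a ha => epos_mono ha)
  have hneg : ∫⁻ a, epos (-(g a)) ∂μ ≤ ∫⁻ a, epos (-(f a)) ∂μ :=
    lintegral_mono_ae (hfg.mono fun a ha => epos_mono (EReal.neg_le_neg_iff.2 ha))
  unfold eIntegral
  split_ifs with h1 h2 h2
  · exact le_rfl
  · exact absurd (top_le_iff.1 (h1 ▸ hpos)) h2
  · exact le_top
  · exact EReal.sub_le_sub (EReal.coe_ennreal_le_coe_ennreal_iff.2 hpos)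
      (EReal.coe_ennreal_le_coe_ennreal_iff.2 hneg)

theorem eIntegral_coe {α : Type*} [MeasurableSpace α] {μ : Measure α} {f : α → ℝ}
    (hf : Integrable f μ) : eIntegral μ (fun a => (f a : EReal)) = ((∫ a, f a ∂μ : ℝ) : EReal) := by
  have h1 : ∫⁻ a, ENNReal.ofReal (f a) ∂μ ≠ ⊤ := hf.lintegral_lt_top.ne
  have h2 : ∫⁻ a, ENNReal.ofReal (-f a) ∂μ ≠ ⊤ := hf.neg.lintegral_lt_top.ne
  have e1 : ∀ a, epos (f a : EReal) = ENNReal.ofReal (f a) := fun a => by simp [epos]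
  have e2 : ∀ a, epos (-(f a : EReal)) = ENNReal.ofReal (-f a) := fun a => by
    rw [← EReal.coe_neg]; simp [epos, -EReal.coe_neg]
  rw [integral_eq_lintegral_pos_part_sub_lintegral_neg_part hf, eIntegral]
  simp only [e1, e2, h1, if_false]
  lift ∫⁻ a, ENNReal.ofReal (f a) ∂μ to NNReal using h1 with x
  lift ∫⁻ a, ENNReal.ofReal (-f a) ∂μ to NNReal using h2 with y
  rfl

theorem exists_measurable_preimage_prodMap {α E : Type*} [MeasurableSpace α] [MeasurableSpace E]
    {G : Set (α × E)} (hG : MeasurableSet G) :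
    ∃ (f : α → ℕ → Bool) (G' : Set ((ℕ → Bool) × E)), Measurable f ∧ MeasurableSet G' ∧
      G = Prod.map f id ⁻¹' G' := by
  classical
  induction G, hG using MeasurableSpace.induction_on_inter generateFrom_prod.symm
    isPiSystem_prod with
  | empty => exact ⟨fun _ _ => true, ∅, measurable_const, .empty, by simp⟩
  | basic t ht =>
    obtain ⟨A, hA, B, hB, rfl⟩ := ht
    refine ⟨fun a _ => decide (a ∈ A), ((fun x : ℕ → Bool => x 0) ⁻¹' {true}) ×ˢ B, ?_, ?_, ?_⟩
    · refine measurable_pi_lambda _ fun _ => measurable_to_bool ?_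
      simpa [preimage] using hA
    · exact ((measurable_pi_apply 0) (measurableSet_singleton _)).prod hB
    · ext; simp
  | compl t _ ih =>
    obtain ⟨f, G', hf, hG', rfl⟩ := ih
    exact ⟨f, G'ᶜ, hf, hG'.compl, rfl⟩
  | iUnion t _ _ ih =>
    choose f G' hf hG' h using ih
    refine ⟨fun a k => f k.unpair.1 a k.unpair.2,
      ⋃ n, Prod.map (fun x k => x (Nat.pair n k)) id ⁻¹' G' n, ?_, ?_, ?_⟩
    · exact measurable_pi_lambda _ fun k => (measurable_pi_apply _).comp (hf _)
    · refine .iUnion fun n => ?_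
      have : Measurable fun (x : ℕ → Bool) k => x (Nat.pair n k) :=
        measurable_pi_lambda _ fun k => measurable_pi_apply _
      exact (this.prodMap measurable_id) (hG' n)
    · ext p
      simp [h, Prod.map]

theorem isCompact_nat_box (n : ℕ → ℕ) : IsCompact {σ : ℕ → ℕ | ∀ i, σ i ≤ n i} := by
  convert isCompact_univ_pi fun i => (Set.finite_Iic (n i)).isCompact using 1
  ext; simp [Pi.le_def]

theorem exists_nat_box_subset {n : ℕ → ℕ} {W : Set (ℕ → ℕ)} (hW : IsOpen W)
    (hnW : {σ : ℕ → ℕ | ∀ i, σ i ≤ n i} ⊆ W) :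
    ∃ k, {σ : ℕ → ℕ | ∀ i < k, σ i ≤ n i} ⊆ W := by
  by_contra! hcon
  have hcon' : ∀ k, ∃ σ : ℕ → ℕ, (∀ i < k, σ i ≤ n i) ∧ σ ∉ W := fun k => by
    simpa [Set.not_subset] using hcon k
  choose σ hσ hσW using hcon'
  obtain ⟨τ, hτ, φ, hφ, hlim⟩ := (isCompact_nat_box n).tendsto_subseq (x := fun k i => min (σ k i) (n i))
    (fun k i => min_le_right _ _)
  have hlim' : Filter.Tendsto (σ ∘ φ) Filter.atTop (nhds τ) := by
    rw [tendsto_pi_nhds] at hlim ⊢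
    intro i
    refine (hlim i).congr' ?_
    filter_upwards [Filter.eventually_gt_atTop i] with k hk
    exact min_eq_left (hσ _ _ (hk.trans_le hφ.le_apply))
  obtain ⟨k, hk⟩ := (hlim'.eventually (hW.mem_nhds (hnW hτ))).exists
  exact hσW _ hk

theorem exists_isCompact_image_measure_ge {X : Type*} [TopologicalSpace X] [T2Space X]
    [MeasurableSpace X] [OpensMeasurableSpace X] (μ : Measure X) [IsFiniteMeasure μ]
    {g : (ℕ → ℕ) → X} (hg : Continuous g) {t : ℝ≥0∞} (ht : t < μ (range g)) :
    ∃ K : Set (ℕ → ℕ), IsCompact K ∧ t ≤ μ (g '' K) := by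
  have hstep : ∀ (k : ℕ) (S : Set (ℕ → ℕ)), t < μ (g '' S) →
      ∃ m, t < μ (g '' (S ∩ {σ | σ k ≤ m})) := by
    intro k S hS
    have hU : g '' S = ⋃ m, g '' (S ∩ {σ | σ k ≤ m}) := by
      rw [← image_iUnion, ← inter_iUnion]
      congr 1
      ext σ
      simpa using fun _ => ⟨σ k, le_rfl⟩
    have hdir : Directed (· ⊆ ·) fun m => g '' (S ∩ {σ | σ k ≤ m}) :=
      Monotone.directed_le fun a b hab => image_mono
        (inter_subset_inter_right _ fun σ (hσ : σ k ≤ a) => hσ.trans hab)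
    rwa [hU, hdir.measure_iUnion, lt_iSup_iff] at hS
  choose m hm using hstep
  let D : ℕ → {S : Set (ℕ → ℕ) // t < μ (g '' S)} := fun k =>
    Nat.rec ⟨univ, by rwa [image_univ]⟩ (fun k S => ⟨_, hm k S.1 S.2⟩) k
  let n : ℕ → ℕ := fun k => m k (D k).1 (D k).2
  have hD : ∀ k, (D k).1 = {σ : ℕ → ℕ | ∀ i < k, σ i ≤ n i} := by
    intro k
    induction k with
    | zero => simp [D]
    | succ k ih =>
      have : (D (k + 1)).1 = (D k).1 ∩ {σ | σ k ≤ n k} := rfl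
      rw [this, ih]
      ext σ
      simp only [mem_inter_iff, mem_ofPred_eq, Nat.lt_succ_iff_lt_or_eq]
      grind
  have hK := isCompact_nat_box n
  refine ⟨_, hK, ?_⟩
  have hsub : ⋂ k, closure (g '' (D k).1) ⊆ g '' {σ : ℕ → ℕ | ∀ i, σ i ≤ n i} := by
    intro y hy
    by_contra hyK
    obtain ⟨U, V, hU, hV, hKU, hyV, hUV⟩ := SeparatedNhds.of_isCompact_isCompact
      (hK.image hg) isCompact_singleton (disjoint_singleton_right.2 hyK)
    obtain ⟨k, hk⟩ := exists_nat_box_subset (hU.preimage hg) (image_subset_iff.1 hKU)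
    rw [← hD, ← image_subset_iff] at hk
    obtain ⟨z, hzV, hz⟩ := mem_closure_iff.1 (mem_iInter.1 hy k) V hV (hyV rfl)
    exact hUV.le_bot ⟨hk hz, hzV⟩
  refine le_trans ?_ (measure_mono hsub)
  have hanti : Antitone fun k => closure (g '' (D k).1) :=
    antitone_nat_of_succ_le fun k => closure_mono (image_mono inter_subset_left)
  rw [hanti.measure_iInter (fun k => isClosed_closure.measurableSet.nullMeasurableSet)
    ⟨0, measure_ne_top _ _⟩]
  exact le_iInf fun k => (D k).2.le.trans (measure_mono subset_closure)

/-- Analytic sets are universally measurable. -/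
theorem MeasureTheory.AnalyticSet.nullMeasurableSet {X : Type*} [TopologicalSpace X] [T2Space X]
    [MeasurableSpace X] [OpensMeasurableSpace X] {A : Set X} (hA : AnalyticSet A)
    (μ : Measure X) [IsFiniteMeasure μ] : NullMeasurableSet A μ := by
  rw [AnalyticSet] at hA
  obtain rfl | ⟨g, hg, rfl⟩ := hA
  · exact .empty
  rcases eq_or_ne (μ (range g)) 0 with h0 | h0
  · exact .of_null h0
  obtain ⟨t, -, ht, hlim⟩ := exists_seq_strictMono_tendsto' (pos_iff_ne_zero.2 h0)
  choose K hK hKt using fun j => exists_isCompact_image_measure_ge μ hg (ht j).2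
  have hB : MeasurableSet (⋃ j, g '' K j) := .iUnion fun j => ((hK j).image hg).measurableSet
  refine hB.nullMeasurableSet.congr (ae_eq_of_subset_of_measure_ge
    (iUnion_subset fun j => image_subset_range _ _) ?_ hB.nullMeasurableSet (measure_ne_top _ _))
  exact le_of_tendsto' hlim fun j => (hKt j).trans (measure_mono (subset_iUnion (fun j => g '' K j) j))

/-- The **measurable projection theorem**, up to null sets. -/
theorem MeasurableSet.nullMeasurableSet_image_fst {α E : Type*} [MeasurableSpace α]
    [MeasurableSpace E] [StandardBorelSpace E] (μ : Measure α) [SigmaFinite μ]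
    {G : Set (α × E)} (hG : MeasurableSet G) : NullMeasurableSet (Prod.fst '' G) μ := by
  obtain ⟨ν, hν, hμν, -⟩ := exists_isFiniteMeasure_absolutelyContinuous μ
  refine NullMeasurableSet.mono_ac ?_ hμν
  obtain ⟨f, G', hf, hG', rfl⟩ := exists_measurable_preimage_prodMap hG
  have hA : AnalyticSet (Prod.fst '' G') := hG'.analyticSet_image measurable_fst
  have := (hA.nullMeasurableSet (ν.map f)).preimage
    (hf.measurePreserving ν).quasiMeasurePreserving
  convert this using 1
  ext a
  simp

theorem Measurable.aemeasurable_iInf_snd {α E : Type*} [MeasurableSpace α]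
    [MeasurableSpace E] [StandardBorelSpace E] (μ : Measure α) [SigmaFinite μ]
    {F : α → E → EReal} (hF : Measurable (Function.uncurry F)) :
    AEMeasurable (fun a => ⨅ y, F a y) μ := by
  refine NullMeasurable.aemeasurable ?_
  have : @Measurable α EReal (eventuallyMeasurableSpace inferInstance (ae μ)) _
      (fun a => ⨅ y, F a y) := by
    refine @measurable_of_Iio EReal α _ _ _ (_) _ _ _ _ fun c => ?_
    have h := MeasurableSet.nullMeasurableSet_image_fst μ (hF (measurableSet_Iio (a := c)))
    have e : (fun a => ⨅ y, F a y) ⁻¹' Iio c = Prod.fst '' (Function.uncurry F ⁻¹' Iio c) := by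
      ext a
      simp [iInf_lt_iff]
    rw [e]
    exact h
  exact this

theorem exists_measurable_isLeast {α E : Type*} [MeasurableSpace α] [MeasurableSpace E]
    [StandardBorelSpace E] (μ : Measure α) [SigmaFinite μ] {G : Set (α × E)}
    (hG : MeasurableSet G) {l : E → ℝ} (hl : Measurable l)
    (hmin : ∀ᵐ a ∂μ, ∃ z, (a, z) ∈ G ∧ ∀ z', (a, z') ∈ G → l z ≤ l z') :
    ∃ m : α → ℝ, Measurable m ∧
      ∀ᵐ a ∂μ, (∃ z, (a, z) ∈ G ∧ l z = m a) ∧ ∀ z, (a, z) ∈ G → m a ≤ l z := by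
  classical
  let F : α → E → EReal := fun a z => if (a, z) ∈ G then (l z : EReal) else ⊤
  have hF : Measurable (Function.uncurry F) :=
    Measurable.ite hG ((hl.comp measurable_snd).coe_real_ereal) measurable_const
  have hm : AEMeasurable (fun a => (⨅ z, F a z).toReal) μ :=
    (hF.aemeasurable_iInf_snd μ).ereal_toReal
  refine ⟨hm.mk _, hm.measurable_mk, ?_⟩
  filter_upwards [hm.ae_eq_mk, hmin] with a ha ⟨z, hz, hzmin⟩
  have hinf : ⨅ z, F a z = l z := by
    refine le_antisymm (iInf_le_of_le z (by simp [F, hz])) (le_iInf fun z' => ?_)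
    by_cases h : (a, z') ∈ G
    · simpa [F, h] using hzmin z' h
    · simp [F, h]
  rw [← ha, hinf, EReal.toReal_coe]
  exact ⟨⟨z, hz, rfl⟩, hzmin⟩

theorem exists_measurable_selection_of_isCompact {α ι : Type*} [MeasurableSpace α] [Fintype ι]
    (μ : Measure α) [SigmaFinite μ] {G : Set (α × (ι → ℝ))} (hG : MeasurableSet G)
    (hcomp : ∀ a, IsCompact {z | (a, z) ∈ G}) (hne : ∀ᵐ a ∂μ, ∃ z, (a, z) ∈ G) :
    ∃ y : α → ι → ℝ, Measurable y ∧ ∀ᵐ a ∂μ, (a, y a) ∈ G := by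
  classical
  suffices h : ∀ s : Finset ι, ∃ y : α → ι → ℝ, Measurable y ∧
      ∀ᵐ a ∂μ, ∃ z, (a, z) ∈ G ∧ ∀ i ∈ s, z i = y a i by
    obtain ⟨y, hy, h⟩ := h Finset.univ
    refine ⟨y, hy, h.mono fun a ⟨z, hz, hzy⟩ => ?_⟩
    rwa [show y a = z from funext fun i => (hzy i (Finset.mem_univ i)).symm]
  intro s
  induction s using Finset.induction_on with
  | empty => exact ⟨0, measurable_zero, by simpa using hne⟩
  | insert j s hj ih =>
    obtain ⟨y, hy, hys⟩ := ih
    let G' : Set (α × (ι → ℝ)) := G ∩ ⋂ i ∈ s, {p | p.2 i = y p.1 i}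
    have hmem : ∀ a z, (a, z) ∈ G' ↔ (a, z) ∈ G ∧ ∀ i ∈ s, z i = y a i := by simp [G']
    have hG' : MeasurableSet G' := by
      refine hG.inter (Finset.measurableSet_biInter _ fun i _ => measurableSet_eq_fun ?_ ?_) <;>
        fun_prop
    have hcomp' : ∀ a, IsCompact {z | (a, z) ∈ G'} := by
      intro a
      have hcl : IsClosed (⋂ i ∈ s, {z : ι → ℝ | z i = y a i}) :=
        isClosed_biInter fun i _ => isClosed_eq (continuous_apply i) continuous_const
      convert (hcomp a).inter_right hcl using 1
      ext z
      simp [hmem]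
    obtain ⟨m, hm, hmG⟩ := exists_measurable_isLeast μ hG' (measurable_pi_apply j) (by
      filter_upwards [hys] with a ⟨z, hz⟩
      obtain ⟨z, hz, hzmin⟩ := (hcomp' a).exists_isMinOn ⟨z, (hmem a z).2 hz⟩
        (continuous_apply j).continuousOn
      exact ⟨z, hz, fun z' hz' => hzmin hz'⟩)
    refine ⟨fun a => Function.update (y a) j (m a), ?_, ?_⟩
    · refine measurable_pi_lambda _ fun i => ?_
      rcases eq_or_ne i j with rfl | h
      · simpa using hm
      · simpa [h] using measurable_pi_iff.1 hy i
    · filter_upwards [hmG] with a ⟨⟨z, hz, hzm⟩, _⟩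
      refine ⟨z, ((hmem a z).1 hz).1, fun i hi => ?_⟩
      rcases eq_or_ne i j with rfl | h
      · simpa using hzm
      · simpa [h] using ((hmem a z).1 hz).2 i (Finset.mem_of_mem_insert_of_ne hi h)

theorem exists_measurable_selection_of_isClosed {α ι : Type*} [MeasurableSpace α] [Fintype ι]
    (μ : Measure α) [SigmaFinite μ] {G : Set (α × (ι → ℝ))} (hG : MeasurableSet G)
    (hclosed : ∀ a, IsClosed {z | (a, z) ∈ G}) (hne : ∀ᵐ a ∂μ, ∃ z, (a, z) ∈ G) :
    ∃ y : α → ι → ℝ, Measurable y ∧ ∀ᵐ a ∂μ, (a, y a) ∈ G := by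
  obtain ⟨m, hm, hmG⟩ := exists_measurable_isLeast μ hG (l := fun z => ‖z‖) measurable_norm (by
    filter_upwards [hne] with a ha
    obtain ⟨z, hz, hdist⟩ := (hclosed a).exists_infDist_eq_dist ha (0 : ι → ℝ)
    refine ⟨z, hz, fun z' hz' => ?_⟩
    have h := Metric.infDist_le_dist_of_mem (s := {z | (a, z) ∈ G}) (x := 0) hz'
    rwa [hdist, dist_zero_left, dist_zero_left] at h)
  obtain ⟨y, hy, hyG⟩ := exists_measurable_selection_of_isCompact μ
    (G := G ∩ {p | ‖p.2‖ ≤ m p.1}) (hG.inter (measurableSet_le (by fun_prop) (by fun_prop)))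
    (fun a => by
      have h : {z | (a, z) ∈ G ∩ {p | ‖p.2‖ ≤ m p.1}} =
          {z | (a, z) ∈ G} ∩ Metric.closedBall 0 (m a) := by ext z; simp
      exact h ▸ (isCompact_closedBall 0 (m a)).inter_left (hclosed a))
    (hmG.mono fun a ⟨⟨z, hz, hzm⟩, _⟩ => ⟨z, hz, hzm.le⟩)
  exact ⟨y, hy, hyG.mono fun a ha => ha.1⟩

theorem measurable_epos : Measurable epos :=
  Measurable.ite (measurableSet_singleton ⊤) measurable_const
    measurable_ereal_toReal.ennreal_ofReal

theorem lintegral_epos_ne_top_of_eIntegral_ne_top {α : Type*} [MeasurableSpace α] {μ : Measure α}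
    {g : α → EReal} (hg : eIntegral μ g ≠ ⊤) : ∫⁻ a, epos (g a) ∂μ ≠ ⊤ := by
  intro h
  simp [eIntegral, h] at hg

theorem ae_lt_top_of_eIntegral_ne_top {α : Type*} [MeasurableSpace α] {μ : Measure α}
    {g : α → EReal} (hm : AEMeasurable g μ) (hg : eIntegral μ g ≠ ⊤) : ∀ᵐ a ∂μ, g a < ⊤ := by
  filter_upwards [ae_lt_top' (measurable_epos.comp_aemeasurable hm)
    (lintegral_epos_ne_top_of_eIntegral_ne_top hg)] with a ha
  refine lt_top_iff_ne_top.2 fun h => ?_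
  simp [h, epos] at ha

theorem exists_integrable_coe_ae_eq {α : Type*} [MeasurableSpace α] {μ : Measure α}
    {g : α → EReal} (hm : Measurable g) (htop : eIntegral μ g ≠ ⊤) (hbot : eIntegral μ g ≠ ⊥) :
    Integrable (fun a => (g a).toReal) μ ∧ ∀ᵐ a ∂μ, g a = ((g a).toReal : EReal) := by
  have hpos := lintegral_epos_ne_top_of_eIntegral_ne_top htop
  have hneg : ∫⁻ a, epos (-(g a)) ∂μ ≠ ⊤ := by
    intro h
    simp [eIntegral, h, hpos] at hbot
  have hlt := ae_lt_top_of_eIntegral_ne_top hm.aemeasurable htop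
  have hgt : ∀ᵐ a ∂μ, ⊥ < g a := by
    filter_upwards [ae_lt_top (measurable_epos.comp hm.neg) hneg] with a ha
    refine bot_lt_iff_ne_bot.2 fun h => ?_
    simp [h, epos] at ha
  refine ⟨⟨hm.ereal_toReal.aestronglyMeasurable, ?_⟩, ?_⟩
  · have hle : ∀ᵐ a ∂μ, ‖(g a).toReal‖ₑ ≤ epos (g a) + epos (-(g a)) := by
      refine ae_of_all _ fun a => ?_
      induction g a with
      | bot => simp
      | top => simp
      | coe r =>
        rw [← EReal.coe_neg, epos, epos, if_neg (EReal.coe_ne_top _),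
          if_neg (EReal.coe_ne_top _), EReal.toReal_coe, EReal.toReal_coe, Real.enorm_eq_ofReal_abs]
        rcases le_total 0 r with h | h
        · simp [abs_of_nonneg h]
        · simp [abs_of_nonpos h]
    refine (lintegral_mono_ae hle).trans_lt ?_
    rw [lintegral_add_left (f := fun a => epos (g a)) (measurable_epos.comp hm)]
    exact ENNReal.add_lt_top.2 ⟨hpos.lt_top, hneg.lt_top⟩
  · filter_upwards [hlt, hgt] with a h1 h2
    exact (EReal.coe_toReal h1.ne h2.ne').symm

theorem exists_integrable_gt_of_eIntegral_lt {α : Type*} [MeasurableSpace α] {μ : Measure α}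
    [SigmaFinite μ] {p : α → EReal} (hp : AEMeasurable p μ) {c : ℝ} (hpc : eIntegral μ p < c) :
    ∃ β : α → ℝ, Measurable β ∧ Integrable β μ ∧ ∫ a, β a ∂μ < c ∧
      ∀ᵐ a ∂μ, p a < (β a : EReal) := by
  have hpt : eIntegral μ p ≠ ⊤ := hpc.ne_top
  have hP := lintegral_epos_ne_top_of_eIntegral_ne_top hpt
  set P := (∫⁻ a, epos (p a) ∂μ).toReal with hPdef
  have hPint : Integrable (fun a => (epos (p a)).toReal) μ :=
    integrable_toReal_of_lintegral_ne_top (measurable_epos.comp_aemeasurable hp) hP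
  have hPeq : ∫ a, (epos (p a)).toReal ∂μ = P :=
    integral_toReal (measurable_epos.comp_aemeasurable hp)
      (ae_lt_top' (measurable_epos.comp_aemeasurable hp) hP)
  obtain ⟨g, hgint, hgp, hgc⟩ : ∃ g : α → NNReal,
      Integrable (fun a => (g a : ℝ)) μ ∧ (∀ a, (g a : ℝ≥0∞) ≤ epos (-(p a))) ∧
      P - ∫ a, (g a : ℝ) ∂μ < c := by
    rcases lt_or_ge P c with h | h
    · exact ⟨0, by simp, by simp, by simpa using h⟩
    have hL : ENNReal.ofReal (P - c) < ∫⁻ a, epos (-(p a)) ∂μ := by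
      rw [eIntegral, if_neg hP, ← ENNReal.ofReal_toReal hP, ← hPdef,
        EReal.coe_ennreal_ofReal, max_eq_left ENNReal.toReal_nonneg] at hpc
      by_contra! hcon
      have hne := (hcon.trans_lt ENNReal.ofReal_lt_top).ne
      have h2 := ENNReal.toReal_le_of_le_ofReal (sub_nonneg.2 h) hcon
      rw [← ENNReal.ofReal_toReal hne, EReal.coe_ennreal_ofReal,
        max_eq_left ENNReal.toReal_nonneg] at hpc
      norm_cast at hpc
      linarith
    rw [lintegral_eq_nnreal] at hL
    simp only [lt_iSup_iff] at hL
    obtain ⟨f, hf, hfL⟩ := hL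
    rw [← SimpleFunc.lintegral_eq_lintegral] at hfL
    obtain ⟨g, hgf, hgt, hgL⟩ := exists_lt_lintegral_simpleFunc_of_lt_lintegral hfL
    have hgi : Integrable (fun a => (g a : ℝ)) μ :=
      integrable_toReal_of_lintegral_ne_top g.measurable.coe_nnreal_ennreal.aemeasurable hgt.ne
    refine ⟨g, hgi, fun a => (ENNReal.coe_le_coe.2 (hgf a)).trans (hf a), ?_⟩
    have h1 := (ENNReal.ofReal_lt_iff_lt_toReal (sub_nonneg.2 h) hgt.ne).1 hgL
    have h2 : ∫ a, (g a : ℝ) ∂μ = (∫⁻ a, g a ∂μ).toReal :=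
      integral_toReal g.measurable.coe_nnreal_ennreal.aemeasurable (by simp)
    linarith
  obtain ⟨w, hw0, hwm, hwint⟩ := exists_pos_lintegral_lt_of_sigmaFinite μ
    (ε := ENNReal.ofReal (c - (P - ∫ a, (g a : ℝ) ∂μ))) (by simpa using hgc)
  have hwi : Integrable (fun a => (w a : ℝ)) μ :=
    integrable_toReal_of_lintegral_ne_top hwm.coe_nnreal_ennreal.aemeasurable hwint.ne_top
  have hwc : ∫ a, (w a : ℝ) ∂μ < c - (P - ∫ a, (g a : ℝ) ∂μ) := by
    have h2 : ∫ a, (w a : ℝ) ∂μ = (∫⁻ a, w a ∂μ).toReal :=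
      integral_toReal hwm.coe_nnreal_ennreal.aemeasurable (by simp)
    rw [h2]
    exact ENNReal.toReal_lt_of_lt_ofReal hwint
  have hdiff : Integrable (fun a => (epos (p a)).toReal - g a) μ := hPint.sub hgint
  have hβ : Integrable (fun a => (epos (p a)).toReal - g a + w a) μ := hdiff.add hwi
  have hβm : AEMeasurable (fun a => (epos (p a)).toReal - g a + w a) μ := hβ.aemeasurable
  refine ⟨hβm.mk _, hβm.measurable_mk, hβ.congr hβm.ae_eq_mk, ?_, ?_⟩
  · rw [← integral_congr_ae hβm.ae_eq_mk, integral_add hdiff hwi,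
      integral_sub hPint hgint, hPeq]
    linarith
  · filter_upwards [hβm.ae_eq_mk, ae_lt_top_of_eIntegral_ne_top hp hpt] with a ha hpa
    rw [← ha]
    have hg := hgp a
    have hw : (0 : ℝ) < w a := hw0 a
    induction hr : p a with
    | bot => exact EReal.bot_lt_coe _
    | top => simp [hr] at hpa
    | coe r =>
      rw [hr, ← EReal.coe_neg, epos, if_neg (EReal.coe_ne_top _), EReal.toReal_coe,
        ← ENNReal.ofReal_coe_nnreal, ENNReal.ofReal_le_ofReal_iff'] at hg
      rw [EReal.coe_lt_coe_iff, epos, if_neg (EReal.coe_ne_top _), EReal.toReal_coe,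
        ENNReal.toReal_ofReal']
      rcases hg with hg | hg
      · linarith [le_max_right r 0, le_max_left r 0, (g a).coe_nonneg]
      · linarith [le_max_left r 0]

theorem tendsto_integral_piecewise {α : Type*} [MeasurableSpace α] {μ : Measure α} {f u : α → ℝ}
    (hf : Integrable f μ) (hu : Integrable u μ) {A : ℕ → Set α} (hA : ∀ n, MeasurableSet (A n))
    (hev : ∀ a, ∀ᶠ n in Filter.atTop, a ∈ A n) [∀ n, DecidablePred (· ∈ A n)] :
    Filter.Tendsto (fun n => ∫ a, (A n).piecewise f u a ∂μ) Filter.atTop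
      (nhds (∫ a, f a ∂μ)) := by
  refine tendsto_integral_of_dominated_convergence (fun a => ‖f a‖ + ‖u a‖)
    (fun n => (Integrable.piecewise (hA n) hf.integrableOn hu.integrableOn).aestronglyMeasurable)
    (hf.norm.add hu.norm) (fun n => ae_of_all _ fun a => ?_) (ae_of_all _ fun a => ?_)
  · by_cases h : a ∈ A n <;> simp [h]
  · refine tendsto_const_nhds.congr' ?_
    filter_upwards [hev a] with n hn
    simp [hn]

/-- The classical interchange rule (Rockafellar): over a decomposable space `𝒳`,
if `inf_{x ∈ 𝒳} ∫ h(x) dμ` is finite then it equals `∫ inf_{y ∈ ℝ^d} h(y) dμ`. -/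
theorem interchange_rule_decomposable
    {α : Type*} [MeasurableSpace α] (μ : Measure α) [SigmaFinite μ]
    {d : ℕ} (h : α → (Fin d → ℝ) → EReal)
    -- h is a normal integrand
    (hlsc : ∀ a, LowerSemicontinuous (h a))
    (hmeas : Measurable (Function.uncurry h))
    (𝒳 : Set (α → Fin d → ℝ))
    (h𝒳meas : ∀ x ∈ 𝒳, Measurable x)
    (h𝒳 : Decomposable μ 𝒳)
    (hfin : ∃ r : ℝ, (⨅ x : 𝒳, eIntegral μ (fun a => h a ((x : α → Fin d → ℝ) a))) = (r : EReal)) :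
    (⨅ x : 𝒳, eIntegral μ (fun a => h a ((x : α → Fin d → ℝ) a))) =
      eIntegral μ (fun a => ⨅ y : Fin d → ℝ, h a y) := by
  classical
  refine le_antisymm ?_ (le_iInf fun x => eIntegral_mono_ae (ae_of_all _ fun a => iInf_le _ _))
  obtain ⟨r, hr⟩ := hfin
  obtain ⟨⟨x₀, hx₀⟩, hx₀top⟩ : ∃ x : 𝒳, eIntegral μ (fun a => h a ((x : α → Fin d → ℝ) a)) < ⊤ :=
    iInf_lt_iff.1 (hr ▸ EReal.coe_lt_top r)
  have hx₀bot : ⊥ < eIntegral μ (fun a => h a (x₀ a)) :=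
    (EReal.bot_lt_coe r).trans_le (hr ▸ iInf_le _ (⟨x₀, hx₀⟩ : 𝒳))
  obtain ⟨hu, hueq⟩ := exists_integrable_coe_ae_eq
    (hmeas.comp (measurable_id.prodMk (h𝒳meas x₀ hx₀))) hx₀top.ne hx₀bot.ne'
  refine EReal.le_of_forall_lt_iff_le.1 fun c hc => ?_
  obtain ⟨β, hβm, hβ, hβc, hpβ⟩ :=
    exists_integrable_gt_of_eIntegral_lt (hmeas.aemeasurable_iInf_snd μ) hc
  obtain ⟨y, hy, hyβ⟩ := exists_measurable_selection_of_isClosed μ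
    (G := {q : α × (Fin d → ℝ) | h q.1 q.2 ≤ β q.1})
    (measurableSet_le hmeas (hβm.comp measurable_fst).coe_real_ereal)
    (fun a => (hlsc a).isClosed_preimage (β a))
    (hpβ.mono fun a ha => (iInf_lt_iff.1 ha).imp fun _ hz => hz.le)
  let A : ℕ → Set α := fun n => {a | ‖y a‖ ≤ n} ∩ spanningSets μ n
  have hA : ∀ n, MeasurableSet (A n) := fun n =>
    (measurableSet_le hy.norm measurable_const).inter (measurableSet_spanningSets μ n)
  have hev : ∀ a, ∀ᶠ n in Filter.atTop, a ∈ A n := by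
    intro a
    obtain ⟨k, hk⟩ := exists_nat_ge ‖y a‖
    filter_upwards [Filter.eventually_ge_atTop k,
      Filter.eventually_ge_atTop (spanningSetsIndex μ a)] with n hkn hn
    exact ⟨hk.trans (Nat.cast_le.2 hkn), mem_spanningSets_of_index_le μ a hn⟩
  obtain ⟨n, hn⟩ :=
    ((tendsto_integral_piecewise hβ hu hA hev).eventually (gt_mem_nhds hβc)).exists
  have hxn := h𝒳 x₀ hx₀ ((A n).indicator y) (hy.indicator (hA n))
    ⟨n, fun a => by
      by_cases ha : a ∈ A n
      · simpa [ha] using ha.1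
      · simp [ha]⟩
    (A n) (hA n) ((measure_mono inter_subset_right).trans_lt (measure_spanningSets_lt_top μ n))
  refine (iInf_le _ (⟨_, hxn⟩ : 𝒳)).trans (le_trans ?_ (EReal.coe_le_coe_iff.2 hn.le))
  rw [← eIntegral_coe (Integrable.piecewise (hA n) hβ.integrableOn hu.integrableOn)]
  refine eIntegral_mono_ae ?_
  filter_upwards [hueq, hyβ] with a hua hya
  by_cases ha : a ∈ A n
  · simpa [ha] using hya
  · simpa [ha] using hua.le
end

section
/- Let f be a closed proper convex function on ℝ^d, θ a finite ℝ^d-valued Radon measure on [0,T], and μ a positive finite measure. With θ = θ^a + θ^s the Lebesgue decomposition of θ with respect to μ, the functional J_f(θ) = ∫ f(dθ^a/dμ) dμ + ∫ f^∞(dθ^s/d|θ^s|) d|θ^s| is well defined (independent of the choice of densities) and convex in θ. -/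
open MeasureTheory Set
open scoped ENNReal

/-- The recession function of `f` based at `u₀`. -/
noncomputable def recFun {E : Type*} [AddCommMonoid E] [SMul ℝ E]
    (f : E → EReal) (u₀ u : E) : EReal :=
  ⨆ α : {a : ℝ // 0 < a}, (f (u₀ + (α : ℝ) • u) - f u₀) * (((α : ℝ)⁻¹ : ℝ) : EReal)

/-- `(g, σ, e)` represents the Lebesgue decomposition of the vector measure `θ` with
respect to `μ`: `g` is the density of `θᵃ`, `σ = |θˢ|` is singular to `μ` and `e` is the
polar density of `θˢ`. -/
def IsRepr {α : Type*} [MeasurableSpace α] (μ : Measure α)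
    {d : ℕ} (θ : Fin d → SignedMeasure α)
    (g : α → Fin d → ℝ) (σ : Measure α) (e : α → Fin d → ℝ) : Prop :=
  Measurable g ∧ Measurable e ∧ (∀ i, Integrable (fun t => g t i) μ) ∧
    IsFiniteMeasure σ ∧ σ.MutuallySingular μ ∧
    (∀ᵐ t ∂σ, ∑ i, e t i ^ 2 = 1) ∧
    ∀ s : Set α, MeasurableSet s → ∀ i,
      θ i s = (∫ t in s, g t i ∂μ) + ∫ t in s, e t i ∂σ

/-- The value `J_f(θ) = ∫ f(dθᵃ/dμ) dμ + ∫ f^∞(dθˢ/d|θˢ|) d|θˢ|` computed from a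
representation of the Lebesgue decomposition. -/
noncomputable def Jval {α : Type*} [MeasurableSpace α] (μ : Measure α)
    {d : ℕ} (f : (Fin d → ℝ) → EReal) (u₀ : Fin d → ℝ)
    (g : α → Fin d → ℝ) (σ : Measure α) (e : α → Fin d → ℝ) : EReal :=
  eIntegral μ (fun t => f (g t)) + eIntegral σ (fun t => recFun f u₀ (e t))

/-- Convexity of an `EReal`-valued function, expressed through its real upper bounds, i.e. through
its epigraph. -/
def ConvexEpigraph {E : Type*} [AddCommMonoid E] [SMul ℝ E] (φ : E → EReal) : Prop :=
  ∀ (x y : E) (a b r s : ℝ), 0 ≤ a → 0 ≤ b → a + b = 1 → φ x ≤ (r : EReal) → φ y ≤ (s : EReal) →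
    φ (a • x + b • y) ≤ ((a * r + b * s : ℝ) : EReal)

/-- The excess of `φ` over a real minorant `m`. -/
noncomputable def excess {E : Type*} (φ : E → EReal) (m : E → ℝ) (x : E) : ℝ≥0∞ :=
  (φ x - (m x : EReal)).toENNReal

lemma excess_le_coe_iff {E : Type*} {φ : E → EReal} {m : E → ℝ} {x : E} {r : NNReal} :
    excess φ m x ≤ (r : ℝ≥0∞) ↔ φ x ≤ ((m x + r : ℝ) : EReal) := by
  unfold excess
  induction φ x using EReal.rec with
  | bot => simp
  | top => simp [-EReal.coe_add]
  | coe y =>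
    rw [← EReal.coe_sub, EReal.real_coe_toENNReal, ENNReal.ofReal_le_iff_le_toReal (by simp),
      EReal.coe_le_coe_iff]
    simp only [ENNReal.coe_toReal]
    exact sub_le_iff_le_add'

lemma excess_convex {E : Type*} [AddCommMonoid E] [Module ℝ E] {φ : E → EReal} {m : E → ℝ}
    (hφ : ConvexEpigraph φ)
    (hm : ∀ (x y : E) (a b : ℝ), a + b = 1 → m (a • x + b • y) = a * m x + b * m y)
    (x y : E) {a b : ℝ} (ha : 0 ≤ a) (hb : 0 ≤ b) (hab : a + b = 1) :
    excess φ m (a • x + b • y) ≤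
      ENNReal.ofReal a * excess φ m x + ENNReal.ofReal b * excess φ m y := by
  rcases ha.eq_or_lt with rfl | ha'
  · obtain rfl : b = 1 := by linarith
    simp
  rcases hb.eq_or_lt with rfl | hb'
  · obtain rfl : a = 1 := by linarith
    simp
  by_cases hx : excess φ m x = ⊤
  · simp [hx, ha']
  by_cases hy : excess φ m y = ⊤
  · simp [hy, hb']
  lift excess φ m x to NNReal using hx with r hr
  lift excess φ m y to NNReal using hy with s hs
  have hcoe : ENNReal.ofReal a * r + ENNReal.ofReal b * s =
      ((a.toNNReal * r + b.toNNReal * s : NNReal) : ℝ≥0∞) := by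
    simp [ENNReal.ofReal]
  rw [hcoe, excess_le_coe_iff]
  refine (hφ x y a b _ _ ha hb hab (excess_le_coe_iff.1 hr.symm.le)
    (excess_le_coe_iff.1 hs.symm.le)).trans ?_
  rw [hm x y a b hab, EReal.coe_le_coe_iff]
  push_cast [Real.coe_toNNReal _ ha, Real.coe_toNNReal _ hb]
  linarith

lemma measurable_excess {E : Type*} [MeasurableSpace E] {φ : E → EReal} {m : E → ℝ}
    (hφ : Measurable φ) (hm : Measurable m) : Measurable (excess φ m) := by
  refine measurable_of_Iic fun c => ?_
  induction c using ENNReal.recTopCoe with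
  | top => simp
  | coe r =>
    have : excess φ m ⁻¹' Iic (r : ℝ≥0∞) = {x | φ x ≤ ((m x + r : ℝ) : EReal)} := by
      ext x
      simp only [mem_preimage, mem_Iic, excess_le_coe_iff, mem_ofPred_eq]
    rw [this]
    exact measurableSet_le hφ (hm.add_const _).coe_real_ereal

/-- A convex lower semicontinuous proper function has a continuous affine minorant. -/
lemma exists_affine_minorant {E : Type*} [NormedAddCommGroup E] [NormedSpace ℝ E] {f : E → EReal}
    (hlsc : LowerSemicontinuous f) (hf : ConvexEpigraph f) {u₀ : E} {c : ℝ} (hc : f u₀ = c) :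
    ∃ (A : E →L[ℝ] ℝ) (b : ℝ), ∀ x, ((A x + b : ℝ) : EReal) ≤ f x := by
  let t : Set (E × ℝ) := {p | f p.1 ≤ (p.2 : EReal)}
  have hconv : Convex ℝ t := fun p hp q hq a b ha hb hab => hf _ _ a b _ _ ha hb hab hp hq
  have hclosed : IsClosed t := hlsc.isClosed_epigraph.preimage
    (continuous_fst.prodMk (continuous_coe_real_ereal.comp continuous_snd))
  have hnot : (u₀, c - 1) ∉ t := by
    simp only [t, mem_ofPred_eq, hc, EReal.coe_le_coe_iff]
    linarith
  obtain ⟨φ, s, hs, hφ⟩ := geometric_hahn_banach_point_closed hconv hclosed hnot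
  have hsplit (x : E) (r : ℝ) : φ (x, r) = φ (x, 0) + r * φ (0, 1) := by
    rw [← smul_eq_mul, ← map_smul, ← map_add]
    simp
  have hu₀ := hφ (u₀, c) (by simp [t, hc])
  rw [hsplit] at hs hu₀
  have hpos : 0 < φ (0, 1) := by nlinarith
  refine ⟨-((φ (0, 1))⁻¹ • φ.comp (ContinuousLinearMap.inl ℝ E ℝ)), (φ (0, 1))⁻¹ * s, fun x => ?_⟩
  refine le_of_not_gt fun hlt => ?_
  obtain ⟨r, hr, hr'⟩ := EReal.lt_iff_exists_real_btwn.1 hlt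
  have h := hφ (x, r) hr.le
  rw [hsplit] at h
  rw [EReal.coe_lt_coe_iff] at hr'
  simp only [neg_apply, smul_apply,
    ContinuousLinearMap.comp_apply, ContinuousLinearMap.inl_apply, smul_eq_mul] at hr'
  have h' := mul_lt_mul_of_pos_right hr' hpos
  have : (-((φ (0, 1))⁻¹ * φ (x, 0)) + (φ (0, 1))⁻¹ * s) * φ (0, 1) = s - φ (x, 0) := by
    field_simp
    ring
  linarith

section Recession

variable {E : Type*} [NormedAddCommGroup E] [NormedSpace ℝ E] {f : E → EReal} {u₀ : E} {c : ℝ}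

lemma recFun_le_coe_iff (hc : f u₀ = c) {u : E} {r : ℝ} :
    recFun f u₀ u ≤ (r : EReal) ↔
      ∀ α : ℝ, 0 < α → f (u₀ + α • u) ≤ ((c + α * r : ℝ) : EReal) := by
  have key (x : EReal) (α : ℝ) (hα : 0 < α) :
      (x - (c : EReal)) * ((α⁻¹ : ℝ) : EReal) ≤ (r : EReal) ↔ x ≤ ((c + α * r : ℝ) : EReal) := by
    induction x using EReal.rec with
    | bot => simp [EReal.bot_mul_coe_of_pos (inv_pos.2 hα)]
    | top => simp [EReal.top_mul_coe_of_pos (inv_pos.2 hα), -EReal.coe_add]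
    | coe y =>
      rw [← EReal.coe_sub, ← EReal.coe_mul, EReal.coe_le_coe_iff, EReal.coe_le_coe_iff,
        ← div_eq_mul_inv, div_le_iff₀ hα, sub_le_iff_le_add', mul_comm]
  rw [recFun, iSup_le_iff, hc]
  exact ⟨fun h α hα => (key _ α hα).1 (h ⟨α, hα⟩), fun h α => (key _ α α.2).2 (h α α.2)⟩

lemma convexEpigraph_recFun (hf : ConvexEpigraph f) (hc : f u₀ = c) :
    ConvexEpigraph (recFun f u₀) := by
  intro x y a b r s ha hb hab hx hy
  rw [recFun_le_coe_iff hc] at hx hy ⊢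
  intro α hα
  have h := hf _ _ a b _ _ ha hb hab (hx α hα) (hy α hα)
  have h₁ : a • (u₀ + α • x) + b • (u₀ + α • y) = u₀ + α • (a • x + b • y) := by
    nth_rewrite 3 [← one_smul ℝ u₀]
    rw [← hab]
    module
  have h₂ : a * (c + α * r) + b * (c + α * s) = c + α * (a * r + b * s) := by
    linear_combination c * hab
  rwa [h₁, h₂] at h

lemma lowerSemicontinuous_recFun (hlsc : LowerSemicontinuous f) (hc : f u₀ = c)
    (hbot : ∀ u, recFun f u₀ u ≠ ⊥) : LowerSemicontinuous (recFun f u₀) := by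
  refine lowerSemicontinuous_iff_isClosed_preimage.2 fun y => ?_
  induction y using EReal.rec with
  | bot => simp [preimage, hbot]
  | top => simp
  | coe r =>
    have : recFun f u₀ ⁻¹' Iic (r : EReal) =
        ⋂ α : {a : ℝ // 0 < a}, (fun u => u₀ + (α : ℝ) • u) ⁻¹'
          (f ⁻¹' Iic ((c + α * r : ℝ) : EReal)) := by
      ext u
      simp only [mem_preimage, mem_Iic, recFun_le_coe_iff hc, mem_iInter, Subtype.forall]
    rw [this]
    exact isClosed_iInter fun α =>
      (lowerSemicontinuous_iff_isClosed_preimage.1 hlsc _).preimage (by fun_prop)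

lemma le_recFun_of_affine_minorant (hc : f u₀ = c) {A : E →L[ℝ] ℝ} {b : ℝ}
    (hA : ∀ x, ((A x + b : ℝ) : EReal) ≤ f x) (u : E) : (A u : EReal) ≤ recFun f u₀ u := by
  refine le_of_not_gt fun hlt => ?_
  obtain ⟨r, hr, hr'⟩ := EReal.lt_iff_exists_real_btwn.1 hlt
  rw [EReal.coe_lt_coe_iff] at hr'
  have hbound (α : ℝ) (hα : 0 < α) : α * (A u - r) ≤ c - A u₀ - b := by
    have h := (hA _).trans ((recFun_le_coe_iff hc).1 hr.le α hα)
    rw [EReal.coe_le_coe_iff] at h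
    simp only [map_add, map_smul, smul_eq_mul] at h
    linarith
  have hpos : 0 < A u - r := sub_pos.2 hr'
  have h := hbound ((|c - A u₀ - b| + 1) / (A u - r)) (by positivity)
  rw [div_mul_cancel₀ _ hpos.ne'] at h
  linarith [le_abs_self (c - A u₀ - b)]

lemma excess_recFun_smul_le (hc : f u₀ = c) (A : E →L[ℝ] ℝ) (u : E) {s : ℝ} (hs : 0 ≤ s) :
    excess (recFun f u₀) A (s • u) ≤ ENNReal.ofReal s * excess (recFun f u₀) A u := by
  rcases hs.eq_or_lt with rfl | hs'
  · rw [zero_smul, ENNReal.ofReal_zero, zero_mul, ← ENNReal.coe_zero, excess_le_coe_iff,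
      recFun_le_coe_iff hc]
    simp [hc]
  by_cases hu : excess (recFun f u₀) A u = ⊤
  · simp [hu, hs']
  lift excess (recFun f u₀) A u to NNReal using hu with r hr
  have hcoe : ENNReal.ofReal s * r = ((s.toNNReal * r : NNReal) : ℝ≥0∞) := by
    simp [ENNReal.ofReal]
  rw [hcoe, excess_le_coe_iff, recFun_le_coe_iff hc]
  have h := (recFun_le_coe_iff hc).1 (excess_le_coe_iff.1 hr.symm.le)
  intro α hα
  have h' := h (α * s) (mul_pos hα hs')
  rw [mul_smul] at h'
  refine h'.trans (EReal.coe_le_coe_iff.2 ?_)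
  push_cast [Real.coe_toNNReal _ hs]
  simp only [map_smul, smul_eq_mul]
  exact le_of_eq (by ring)

lemma excess_recFun_smul (hc : f u₀ = c) (A : E →L[ℝ] ℝ) (u : E) {s : ℝ} (hs : 0 ≤ s) :
    excess (recFun f u₀) A (s • u) = ENNReal.ofReal s * excess (recFun f u₀) A u := by
  refine le_antisymm (excess_recFun_smul_le hc A u hs) ?_
  rcases hs.eq_or_lt with rfl | hs'
  · simp
  have h := excess_recFun_smul_le hc A (s • u) (inv_nonneg.2 hs)
  rw [inv_smul_smul₀ hs'.ne', ENNReal.ofReal_inv_of_pos hs'] at h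
  calc _ ≤ ENNReal.ofReal s * ((ENNReal.ofReal s)⁻¹ * excess (recFun f u₀) A (s • u)) := by gcongr
    _ = _ := by
      rw [← mul_assoc, ENNReal.mul_inv_cancel (by simpa using hs') ENNReal.ofReal_ne_top, one_mul]

lemma excess_recFun_combination (hf : ConvexEpigraph f) (hc : f u₀ = c) (A : E →L[ℝ] ℝ)
    (x y z : E) {a b p q r : ℝ} (ha : 0 ≤ a) (hb : 0 ≤ b) (hab : a + b = 1)
    (hp : 0 ≤ p) (hq : 0 ≤ q) (hr : 0 ≤ r)
    (h : r • z = a • p • x + b • q • y) :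
    ENNReal.ofReal r * excess (recFun f u₀) A z ≤
      ENNReal.ofReal a * (ENNReal.ofReal p * excess (recFun f u₀) A x) +
        ENNReal.ofReal b * (ENNReal.ofReal q * excess (recFun f u₀) A y) := by
  rw [← excess_recFun_smul hc A _ hp, ← excess_recFun_smul hc A _ hq,
    ← excess_recFun_smul hc A _ hr, h]
  exact excess_convex (convexEpigraph_recFun hf hc) (fun x y a b _ => by simp) _ _ ha hb hab

end Recession

/-- The integral of a function with an integrable minorant splits into the (nonnegative) integral
of the excess and the integral of the minorant. -/
lemma eIntegral_eq_lintegral_excess_add {α : Type*} [MeasurableSpace α] {μ : Measure α}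
    {φ : α → EReal} {m : α → ℝ} (hφ : Measurable φ) (hmm : Measurable m) (hm : Integrable m μ)
    (hle : ∀ t, (m t : EReal) ≤ φ t) :
    eIntegral μ φ = ((∫⁻ t, excess φ m t ∂μ : ℝ≥0∞) : EReal) + ((∫ t, m t ∂μ : ℝ) : EReal) := by
  have hpt (t : α) : epos (φ t) + ENNReal.ofReal (-m t) =
      excess φ m t + (ENNReal.ofReal (m t) + epos (-φ t)) := by
    have hle := hle t
    unfold excess epos
    generalize φ t = z at hle ⊢
    induction z using EReal.rec with
    | bot => simp at hle
    | top => simp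
    | coe y =>
      rw [EReal.coe_le_coe_iff] at hle
      simp only [EReal.coe_ne_top, if_false, ← EReal.coe_neg, ← EReal.coe_sub, EReal.toReal_coe,
        EReal.real_coe_toENNReal]
      rw [← ENNReal.toReal_eq_toReal_iff' (by simp) (by simp)]
      rw [ENNReal.toReal_add (by simp) (by simp), ENNReal.toReal_add (by simp) (by simp),
        ENNReal.toReal_add (by simp) (by simp)]
      simp only [ENNReal.toReal_ofReal']
      rcases le_total 0 y with h | h <;> rcases le_total 0 (m t) with h' | h' <;>
        simp [h, h', hle] <;> linarith
  have hneg (t : α) : epos (-φ t) ≤ ENNReal.ofReal (-m t) := by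
    have hle := EReal.neg_le_neg_iff.2 (hle t)
    exact EReal.toENNReal_le_toENNReal hle
  have hexc := measurable_excess hφ hmm
  have hposm : Measurable fun t => epos (φ t) := hφ.ereal_toENNReal
  have hI : ∫⁻ t, epos (φ t) ∂μ + ∫⁻ t, ENNReal.ofReal (-m t) ∂μ =
      ∫⁻ t, excess φ m t ∂μ + (∫⁻ t, ENNReal.ofReal (m t) ∂μ + ∫⁻ t, epos (-φ t) ∂μ) := by
    rw [← lintegral_add_left hposm, ← lintegral_add_left hmm.ennreal_ofReal,
      ← lintegral_add_left hexc]
    exact lintegral_congr hpt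
  have hM : ∫⁻ t, ENNReal.ofReal (m t) ∂μ ≠ ⊤ := hm.lintegral_lt_top.ne
  have hM' : ∫⁻ t, ENNReal.ofReal (-m t) ∂μ ≠ ⊤ := hm.neg.lintegral_lt_top.ne
  have hN : ∫⁻ t, epos (-φ t) ∂μ ≠ ⊤ := ne_top_of_le_ne_top hM' (lintegral_mono hneg)
  rw [eIntegral, integral_eq_lintegral_pos_part_sub_lintegral_neg_part hm]
  generalize ∫⁻ t, epos (φ t) ∂μ = P at *
  generalize ∫⁻ t, epos (-φ t) ∂μ = N at *
  generalize ∫⁻ t, ENNReal.ofReal (m t) ∂μ = M at *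
  generalize ∫⁻ t, ENNReal.ofReal (-m t) ∂μ = M' at *
  generalize ∫⁻ t, excess φ m t ∂μ = G at *
  split_ifs with hP
  · have : G = ⊤ := by
      by_contra hG
      rw [hP, top_add] at hI
      exact ENNReal.add_ne_top.2 ⟨hG, ENNReal.add_ne_top.2 ⟨hM, hN⟩⟩ hI.symm
    rw [this, EReal.coe_ennreal_top, EReal.top_add_coe]
  · have hG : G ≠ ⊤ := fun hG => by
      rw [hG, top_add] at hI
      exact ENNReal.add_ne_top.2 ⟨hP, hM'⟩ hI
    lift P to NNReal using hP
    lift N to NNReal using hN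
    lift M to NNReal using hM
    lift M' to NNReal using hM'
    lift G to NNReal using hG
    have hI' : (P : ℝ) + M' = G + (M + N) := by exact_mod_cast hI
    simp only [EReal.coe_nnreal_eq_coe_real, ENNReal.coe_toReal]
    rw [← EReal.coe_sub, ← EReal.coe_add, EReal.coe_eq_coe_iff]
    linarith

section Representation

variable {α : Type*} [MeasurableSpace α] {μ : Measure α} {d : ℕ}

namespace IsRepr

variable {θ : Fin d → SignedMeasure α} {g : α → Fin d → ℝ} {σ : Measure α} {e : α → Fin d → ℝ}

lemma integrable_polar (h : IsRepr μ θ g σ e) (i : Fin d) : Integrable (fun t => e t i) σ := by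
  obtain ⟨-, he, -, hσ, -, hnorm, -⟩ := h
  refine Integrable.of_bound (measurable_pi_iff.1 he i).aestronglyMeasurable 1 ?_
  filter_upwards [hnorm] with t ht
  rw [Real.norm_eq_abs, ← sq_le_one_iff_abs_le_one, ← ht]
  exact Finset.single_le_sum (f := fun j => e t j ^ 2) (fun j _ => sq_nonneg _) (Finset.mem_univ i)

lemma setIntegral_density (h : IsRepr μ θ g σ e) {T : Set α} (hT : MeasurableSet T)
    (hσT : σ T = 0) (hμT : μ Tᶜ = 0) {s : Set α} (hs : MeasurableSet s) (i : Fin d) :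
    ∫ t in s, g t i ∂μ = θ i (s ∩ T) := by
  rw [h.2.2.2.2.2.2 _ (hs.inter hT) i, setIntegral_measure_zero _ (measure_mono_null
    inter_subset_right hσT), add_zero]
  refine (setIntegral_congr_set ?_).symm
  exact inter_ae_eq_left_of_ae_eq_univ (ae_eq_univ.2 hμT)

lemma setIntegral_polar (h : IsRepr μ θ g σ e) {T : Set α} (hT : MeasurableSet T)
    (hσT : σ T = 0) (hμT : μ Tᶜ = 0) {s : Set α} (hs : MeasurableSet s) (i : Fin d) :
    ∫ t in s, e t i ∂σ = θ i (s ∩ Tᶜ) := by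
  rw [h.2.2.2.2.2.2 _ (hs.inter hT.compl) i, setIntegral_measure_zero _ (measure_mono_null
    inter_subset_right hμT), zero_add]
  refine (setIntegral_congr_set ?_).symm
  exact inter_ae_eq_left_of_ae_eq_univ (ae_eq_univ.2 (by rwa [compl_compl]))

end IsRepr

section Combination

variable {θ₁ θ₂ : Fin d → SignedMeasure α} {a b : ℝ} {g₁ g₂ g₃ : α → Fin d → ℝ}
  {σ₁ σ₂ σ₃ : Measure α} {e₁ e₂ e₃ : α → Fin d → ℝ}

lemma density_combination_ae_eq (h₁ : IsRepr μ θ₁ g₁ σ₁ e₁) (h₂ : IsRepr μ θ₂ g₂ σ₂ e₂)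
    (h₃ : IsRepr μ (a • θ₁ + b • θ₂) g₃ σ₃ e₃) {T : Set α} (hT : MeasurableSet T)
    (hT₁ : σ₁ T = 0) (hT₂ : σ₂ T = 0) (hT₃ : σ₃ T = 0) (hμT : μ Tᶜ = 0) :
    ∀ᵐ t ∂μ, g₃ t = a • g₁ t + b • g₂ t := by
  have hi (i : Fin d) : ∀ᵐ t ∂μ, g₃ t i = a * g₁ t i + b * g₂ t i := by
    have hg₁ := h₁.2.2.1 i
    have hg₂ := h₂.2.2.1 i
    refine Integrable.ae_eq_of_forall_setIntegral_eq _ _ (h₃.2.2.1 i)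
      ((hg₁.const_mul a).add (hg₂.const_mul b)) fun s hs _ => ?_
    rw [integral_add (hg₁.const_mul a).integrableOn (hg₂.const_mul b).integrableOn,
      integral_const_mul, integral_const_mul, h₁.setIntegral_density hT hT₁ hμT hs,
      h₂.setIntegral_density hT hT₂ hμT hs, h₃.setIntegral_density hT hT₃ hμT hs]
    simp
  filter_upwards [ae_all_iff.2 hi] with t ht
  ext i
  simp [ht i]

lemma polar_combination_ae_eq (h₁ : IsRepr μ θ₁ g₁ σ₁ e₁) (h₂ : IsRepr μ θ₂ g₂ σ₂ e₂)
    (h₃ : IsRepr μ (a • θ₁ + b • θ₂) g₃ σ₃ e₃) {T : Set α} (hT : MeasurableSet T)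
    (hT₁ : σ₁ T = 0) (hT₂ : σ₂ T = 0) (hT₃ : σ₃ T = 0) (hμT : μ Tᶜ = 0)
    {ν : Measure α} [IsFiniteMeasure ν] (hν₁ : σ₁ ≪ ν) (hν₂ : σ₂ ≪ ν) (hν₃ : σ₃ ≪ ν) :
    ∀ᵐ t ∂ν, (σ₃.rnDeriv ν t).toReal • e₃ t =
      a • (σ₁.rnDeriv ν t).toReal • e₁ t + b • (σ₂.rnDeriv ν t).toReal • e₂ t := by
  have := h₁.2.2.2.1
  have := h₂.2.2.2.1
  have := h₃.2.2.2.1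
  have hi (i : Fin d) : ∀ᵐ t ∂ν, (σ₃.rnDeriv ν t).toReal • e₃ t i =
      a * (σ₁.rnDeriv ν t).toReal • e₁ t i + b * (σ₂.rnDeriv ν t).toReal • e₂ t i := by
    have he₁ := (integrable_rnDeriv_smul_iff hν₁).2 (h₁.integrable_polar i)
    have he₂ := (integrable_rnDeriv_smul_iff hν₂).2 (h₂.integrable_polar i)
    have he₃ := (integrable_rnDeriv_smul_iff hν₃).2 (h₃.integrable_polar i)
    refine Integrable.ae_eq_of_forall_setIntegral_eq _ _ he₃
      ((he₁.const_mul a).add (he₂.const_mul b)) fun s hs _ => ?_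
    rw [integral_add (he₁.const_mul a).integrableOn (he₂.const_mul b).integrableOn,
      integral_const_mul, integral_const_mul, setIntegral_rnDeriv_smul hν₁ hs,
      setIntegral_rnDeriv_smul hν₂ hs, setIntegral_rnDeriv_smul hν₃ hs,
      h₁.setIntegral_polar hT hT₁ hμT hs, h₂.setIntegral_polar hT hT₂ hμT hs,
      h₃.setIntegral_polar hT hT₃ hμT hs]
    simp
  filter_upwards [ae_all_iff.2 hi] with t ht
  ext i
  simpa using ht i

lemma lintegral_ofReal_toReal_rnDeriv_mul {σ ν : Measure α} [IsFiniteMeasure σ]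
    [IsFiniteMeasure ν] (hν : σ ≪ ν)
    {F : α → ℝ≥0∞} (hF : Measurable F) :
    ∫⁻ t, ENNReal.ofReal (σ.rnDeriv ν t).toReal * F t ∂ν = ∫⁻ t, F t ∂σ := by
  rw [← lintegral_rnDeriv_mul hν hF.aemeasurable]
  refine lintegral_congr_ae ?_
  filter_upwards [σ.rnDeriv_lt_top ν] with t ht
  rw [ENNReal.ofReal_toReal ht.ne]

variable {f : (Fin d → ℝ) → EReal} {u₀ : Fin d → ℝ} {c : ℝ}

lemma Jval_eq_add [IsFiniteMeasure μ] {θ : Fin d → SignedMeasure α} {g : α → Fin d → ℝ}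
    {σ : Measure α} {e : α → Fin d → ℝ} (h : IsRepr μ θ g σ e) (hf : Measurable f)
    (hrec : Measurable (recFun f u₀)) (hc : f u₀ = c) {A : (Fin d → ℝ) →L[ℝ] ℝ} {β : ℝ}
    (hA : ∀ x, ((A x + β : ℝ) : EReal) ≤ f x) :
    Jval μ f u₀ g σ e =
      ((∫⁻ t, excess f (fun x => A x + β) (g t) ∂μ +
          ∫⁻ t, excess (recFun f u₀) A (e t) ∂σ : ℝ≥0∞) : EReal) +
        ((A (fun i => θ i univ) + β * μ.real univ : ℝ) : EReal) := by
  have he := h.integrable_polar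
  obtain ⟨hgm, hem, hg, hσ, -, -, hθ⟩ := h
  have hgI : Integrable g μ := Integrable.of_eval hg
  have heI : Integrable e σ := Integrable.of_eval he
  have hAm : Measurable A := A.continuous.measurable
  rw [Jval, eIntegral_eq_lintegral_excess_add (φ := fun t => f (g t))
      (m := fun t => A (g t) + β) (hf.comp hgm) ((hAm.comp hgm).add_const β)
      ((A.integrable_comp hgI).add (integrable_const β)) (fun t => hA (g t)),
    eIntegral_eq_lintegral_excess_add (φ := fun t => recFun f u₀ (e t))
      (m := fun t => A (e t)) (hrec.comp hem) (hAm.comp hem)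
      (A.integrable_comp heI) (fun t => le_recFun_of_affine_minorant hc hA (e t)),
    integral_add (A.integrable_comp hgI) (integrable_const β), integral_const,
    A.integral_comp_comm hgI, A.integral_comp_comm heI, add_add_add_comm, ← EReal.coe_add,
    ← EReal.coe_ennreal_add]
  have hsum : (fun i => θ i univ) = ∫ t, g t ∂μ + ∫ t, e t ∂σ := by
    ext i
    rw [hθ univ MeasurableSet.univ i, Pi.add_apply, eval_integral hg, eval_integral he,
      setIntegral_univ, setIntegral_univ]
  rw [hsum, map_add, smul_eq_mul]
  congr 2
  ring

lemma lintegral_excess_combination_le [IsFiniteMeasure μ]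
    (h₁ : IsRepr μ θ₁ g₁ σ₁ e₁) (h₂ : IsRepr μ θ₂ g₂ σ₂ e₂)
    (h₃ : IsRepr μ (a • θ₁ + b • θ₂) g₃ σ₃ e₃) (ha : 0 ≤ a) (hb : 0 ≤ b) (hab : a + b = 1)
    (hconv : ConvexEpigraph f) (hf : Measurable f) (hrec : Measurable (recFun f u₀))
    (hc : f u₀ = c) (A : (Fin d → ℝ) →L[ℝ] ℝ) (β : ℝ) :
    ∫⁻ t, excess f (fun x => A x + β) (g₃ t) ∂μ + ∫⁻ t, excess (recFun f u₀) A (e₃ t) ∂σ₃ ≤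
      ENNReal.ofReal a * (∫⁻ t, excess f (fun x => A x + β) (g₁ t) ∂μ +
          ∫⁻ t, excess (recFun f u₀) A (e₁ t) ∂σ₁) +
        ENNReal.ofReal b * (∫⁻ t, excess f (fun x => A x + β) (g₂ t) ∂μ +
          ∫⁻ t, excess (recFun f u₀) A (e₂ t) ∂σ₂) := by
  have := h₁.2.2.2.1
  have := h₂.2.2.2.1
  have := h₃.2.2.2.1
  have hAm : Measurable A := A.continuous.measurable
  have hF : Measurable (excess f (fun x => A x + β)) := measurable_excess hf (hAm.add_const β)
  have hH : Measurable (excess (recFun f u₀) A) := measurable_excess hrec hAm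
  let ν := σ₁ + σ₂ + σ₃
  have hν₁ : σ₁ ≪ ν := Measure.absolutelyContinuous_of_le
    ((Measure.le_add_right le_rfl).trans (Measure.le_add_right le_rfl))
  have hν₂ : σ₂ ≪ ν := Measure.absolutelyContinuous_of_le
    ((Measure.le_add_left le_rfl).trans (Measure.le_add_right le_rfl))
  have hν₃ : σ₃ ≪ ν := Measure.absolutelyContinuous_of_le (Measure.le_add_left le_rfl)
  obtain ⟨T, hT, hνT, hμT⟩ : ν.MutuallySingular μ :=
    (h₁.2.2.2.2.1.add_left h₂.2.2.2.2.1).add_left h₃.2.2.2.2.1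
  have hT₁ := hν₁ hνT
  have hT₂ := hν₂ hνT
  have hT₃ := hν₃ hνT
  have hac : ∫⁻ t, excess f (fun x => A x + β) (g₃ t) ∂μ ≤
      ENNReal.ofReal a * ∫⁻ t, excess f (fun x => A x + β) (g₁ t) ∂μ +
        ENNReal.ofReal b * ∫⁻ t, excess f (fun x => A x + β) (g₂ t) ∂μ := by
    have hm {g : α → Fin d → ℝ} (hg : Measurable g) :
        Measurable fun t => excess f (fun x => A x + β) (g t) := hF.comp hg
    rw [← lintegral_const_mul _ (hm h₁.1), ← lintegral_const_mul _ (hm h₂.1),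
      ← lintegral_add_left ((hm h₁.1).const_mul _)]
    refine lintegral_mono_ae ?_
    filter_upwards [density_combination_ae_eq h₁ h₂ h₃ hT hT₁ hT₂ hT₃ hμT] with t ht
    rw [ht]
    refine excess_convex hconv (fun x y a b hab => ?_) _ _ ha hb hab
    simp only [map_add, map_smul, smul_eq_mul]
    linear_combination -β * hab
  have hsing : ∫⁻ t, excess (recFun f u₀) A (e₃ t) ∂σ₃ ≤
      ENNReal.ofReal a * ∫⁻ t, excess (recFun f u₀) A (e₁ t) ∂σ₁ +
        ENNReal.ofReal b * ∫⁻ t, excess (recFun f u₀) A (e₂ t) ∂σ₂ := by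
    have hm {e : α → Fin d → ℝ} (he : Measurable e) :
        Measurable fun t => excess (recFun f u₀) A (e t) := hH.comp he
    have hm' (σ : Measure α) {e : α → Fin d → ℝ} (he : Measurable e) : Measurable fun t =>
        ENNReal.ofReal (σ.rnDeriv ν t).toReal * excess (recFun f u₀) A (e t) :=
      (σ.measurable_rnDeriv ν).ennreal_toReal.ennreal_ofReal.mul (hm he)
    rw [← lintegral_ofReal_toReal_rnDeriv_mul hν₁ (hm h₁.2.1),
      ← lintegral_ofReal_toReal_rnDeriv_mul hν₂ (hm h₂.2.1),
      ← lintegral_ofReal_toReal_rnDeriv_mul hν₃ (hm h₃.2.1),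
      ← lintegral_const_mul _ (hm' σ₁ h₁.2.1), ← lintegral_const_mul _ (hm' σ₂ h₂.2.1),
      ← lintegral_add_left ((hm' σ₁ h₁.2.1).const_mul _)]
    refine lintegral_mono_ae ?_
    filter_upwards [polar_combination_ae_eq h₁ h₂ h₃ hT hT₁ hT₂ hT₃ hμT hν₁ hν₂ hν₃] with t ht
    exact excess_recFun_combination hconv hc A _ _ _ ha hb hab ENNReal.toReal_nonneg
      ENNReal.toReal_nonneg ENNReal.toReal_nonneg ht
  calc _ ≤ _ := add_le_add hac hsing
    _ = _ := by ring

end Combination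

end Representation

lemma EReal.coe_mul_coe_ennreal_add_coe {a : ℝ} (ha : 0 ≤ a) (X : ℝ≥0∞) (L : ℝ) :
    (a : EReal) * ((X : EReal) + (L : EReal)) =
      ((ENNReal.ofReal a * X : ℝ≥0∞) : EReal) + ((a * L : ℝ) : EReal) := by
  rw [EReal.left_distrib_of_nonneg_of_ne_top (EReal.coe_nonneg.2 ha) (EReal.coe_ne_top a),
    EReal.coe_ennreal_mul, EReal.coe_ennreal_ofReal, max_eq_left ha, EReal.coe_mul]

theorem Jval_combination_le {α : Type*} [MeasurableSpace α] {μ : Measure α} [IsFiniteMeasure μ]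
    {d : ℕ} {f : (Fin d → ℝ) → EReal} (hlsc : LowerSemicontinuous f) (hconv : ConvexEpigraph f)
    {u₀ : Fin d → ℝ} {c : ℝ} (hc : f u₀ = c) {θ₁ θ₂ : Fin d → SignedMeasure α} {a b : ℝ}
    (ha : 0 ≤ a) (hb : 0 ≤ b) (hab : a + b = 1) {g₁ g₂ g₃ : α → Fin d → ℝ}
    {σ₁ σ₂ σ₃ : Measure α} {e₁ e₂ e₃ : α → Fin d → ℝ} (h₁ : IsRepr μ θ₁ g₁ σ₁ e₁)
    (h₂ : IsRepr μ θ₂ g₂ σ₂ e₂) (h₃ : IsRepr μ (a • θ₁ + b • θ₂) g₃ σ₃ e₃) :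
    Jval μ f u₀ g₃ σ₃ e₃ ≤
      (a : EReal) * Jval μ f u₀ g₁ σ₁ e₁ + (b : EReal) * Jval μ f u₀ g₂ σ₂ e₂ := by
  obtain ⟨A, β, hA⟩ := exists_affine_minorant hlsc hconv hc
  have hrec : Measurable (recFun f u₀) :=
    (lowerSemicontinuous_recFun hlsc hc fun u =>
      ne_bot_of_le_ne_bot (EReal.coe_ne_bot _) (le_recFun_of_affine_minorant hc hA u)).measurable
  have hf := hlsc.measurable
  rw [Jval_eq_add h₁ hf hrec hc hA, Jval_eq_add h₂ hf hrec hc hA, Jval_eq_add h₃ hf hrec hc hA,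
    EReal.coe_mul_coe_ennreal_add_coe ha, EReal.coe_mul_coe_ennreal_add_coe hb,
    add_add_add_comm, ← EReal.coe_ennreal_add, ← EReal.coe_add]
  refine add_le_add (EReal.coe_ennreal_le_coe_ennreal_iff.2
    (lintegral_excess_combination_le h₁ h₂ h₃ ha hb hab hconv hf hrec hc A β))
    (EReal.coe_le_coe_iff.2 (le_of_eq ?_))
  have hθ : (fun i => (a • θ₁ + b • θ₂) i univ) =
      a • (fun i => θ₁ i univ) + b • (fun i => θ₂ i univ) := by
    ext i
    simp
  rw [hθ, map_add, map_smul, map_smul, smul_eq_mul, smul_eq_mul]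
  linear_combination -(β * μ.real univ) * hab


/-- The functional `J_f` is well defined (independent of the choice of densities in the
Lebesgue decomposition) and convex in `θ`. -/
theorem Jf_well_defined_and_convex
    {α : Type*} [MeasurableSpace α] (μ : Measure α) [IsFiniteMeasure μ]
    {d : ℕ} (f : (Fin d → ℝ) → EReal)
    (hlsc : LowerSemicontinuous f)
    (hcvx : ∀ x y : Fin d → ℝ, ∀ a b : ℝ, 0 ≤ a → 0 ≤ b → a + b = 1 →
      f (a • x + b • y) ≤ (a : EReal) * f x + (b : EReal) * f y)
    (hproper₁ : ∀ x, f x ≠ ⊥)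
    (u₀ : Fin d → ℝ) (hu₀ : f u₀ ≠ ⊤) :
    -- well-definedness: any two representations of θ give the same value
    (∀ (θ : Fin d → SignedMeasure α) g σ e g' σ' e',
      IsRepr μ θ g σ e → IsRepr μ θ g' σ' e' →
        Jval μ f u₀ g σ e = Jval μ f u₀ g' σ' e') ∧
    -- convexity in θ
    (∀ (θ₁ θ₂ : Fin d → SignedMeasure α) (lam : ℝ), 0 ≤ lam → lam ≤ 1 →
      ∀ g₁ σ₁ e₁ g₂ σ₂ e₂ g₃ σ₃ e₃,
        IsRepr μ θ₁ g₁ σ₁ e₁ → IsRepr μ θ₂ g₂ σ₂ e₂ →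
        IsRepr μ (lam • θ₁ + (1 - lam) • θ₂) g₃ σ₃ e₃ →
          Jval μ f u₀ g₃ σ₃ e₃ ≤
            (lam : EReal) * Jval μ f u₀ g₁ σ₁ e₁ +
              ((1 - lam : ℝ) : EReal) * Jval μ f u₀ g₂ σ₂ e₂) := by
  obtain ⟨c, hc⟩ : ∃ c : ℝ, f u₀ = c := ⟨_, (EReal.coe_toReal hu₀ (hproper₁ u₀)).symm⟩
  have hconv : ConvexEpigraph f := fun x y a b r s ha hb hab hx hy => by
    refine (hcvx x y a b ha hb hab).trans ?_
    rw [EReal.coe_add, EReal.coe_mul, EReal.coe_mul]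
    gcongr
  refine ⟨fun θ g σ e g' σ' e' h h' => ?_, fun θ₁ θ₂ lam h0 h1 g₁ σ₁ e₁ g₂ σ₂ e₂ g₃ σ₃ e₃ =>
    Jval_combination_le hlsc hconv hc h0 (sub_nonneg.2 h1) (add_sub_cancel lam 1)⟩
  have key {g σ e g' σ' e'} (h : IsRepr μ θ g σ e) (h' : IsRepr μ θ g' σ' e') :
      Jval μ f u₀ g σ e ≤ Jval μ f u₀ g' σ' e' := by
    have h₀ : IsRepr μ ((1 : ℝ) • θ + (0 : ℝ) • θ) g σ e := by
      rwa [one_smul, zero_smul, add_zero]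
    simpa using Jval_combination_le hlsc hconv hc zero_le_one le_rfl (add_zero 1) h' h' h₀
  exact le_antisymm (key h h') (key h' h)
end
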